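/- arXiv:1010.1890 — 2 statements merged into one kernel-verified Lean document; each statement's English description precedes it below -/
import Mathlib

section
/- Let k be a field of prime characteristic p, let e ≥ 1 be an integer, and let f ∈ k[x]. Then D_{p^e}(f^{p^e}) = (f')^{p^e}, where D_{p^e} is the p^e-th Hasse derivative and f' is the formal derivative of f. -/
open Polynomial

/-!
In exponential characteristic `p`, raising a polynomial to the power `q = p ^ e` substitutes `X ^ q`
for `X` and raises the coefficients to the power `q`. Hasse derivatives commute
with the change of coefficients. When `p` is prime, `choose (q * n) (q * j) ≡ choose n j [MOD p]` by
Lucas, so the substitution turns the `j`-th Hasse derivative into the `(q * j)`-th one.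
-/

theorem natCast_choose_pow_mul_pow_mul (R : Type*) [AddMonoidWithOne R] (p : ℕ) [ExpChar R p]
    (e n j : ℕ) : ((p ^ e * n).choose (p ^ e * j) : R) = n.choose j := by
  obtain _ | hp := ‹ExpChar R p›
  · simp only [one_pow, one_mul]
  · have := Fact.mk hp
    exact CharP.natCast_eq_natCast' R p Choose.choose_pow_mul_pow_mul_modEq_choose_nat

theorem hasseDeriv_map {R S : Type*} [Semiring R] [Semiring S] (φ : R →+* S) (j : ℕ) (f : R[X]) :
    hasseDeriv j (f.map φ) = (hasseDeriv j f).map φ := by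
  ext n
  simp only [hasseDeriv_coeff, coeff_map, map_mul, map_natCast]

section ExpChar

variable {R : Type*} [CommSemiring R] (p : ℕ) [ExpChar R p] (e j : ℕ) (f : R[X])

theorem hasseDeriv_expand_pow :
    hasseDeriv (p ^ e * j) (expand R (p ^ e) f) = expand R (p ^ e) (hasseDeriv j f) := by
  induction f using Polynomial.induction_on' with
  | add f g hf hg => simp only [map_add, hf, hg]
  | monomial n a =>
    rw [expand_monomial, mul_comm n, hasseDeriv_monomial, natCast_choose_pow_mul_pow_mul R p,
      ← Nat.mul_sub, mul_comm, hasseDeriv_monomial, expand_monomial]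

theorem hasseDeriv_pow_frobenius_general :
    hasseDeriv (p ^ e * j) (f ^ p ^ e) = hasseDeriv j f ^ p ^ e :=
  calc hasseDeriv (p ^ e * j) (f ^ p ^ e)
    _ = hasseDeriv (p ^ e * j) ((expand R (p ^ e) f).map (iterateFrobenius R p e)) := by
        rw [map_iterateFrobenius_expand]
    _ = (hasseDeriv (p ^ e * j) (expand R (p ^ e) f)).map (iterateFrobenius R p e) :=
        hasseDeriv_map _ _ _
    _ = (expand R (p ^ e) (hasseDeriv j f)).map (iterateFrobenius R p e) := by
        rw [hasseDeriv_expand_pow]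
    _ = hasseDeriv j f ^ p ^ e := map_iterateFrobenius_expand p _ e

end ExpChar

/-- For a field `k` of prime characteristic `p`, `e ≥ 1` and `f ∈ k[x]`,
`D_{p^e}(f^{p^e}) = (f')^{p^e}`. -/
theorem hasseDeriv_pow_frobenius (k : Type*) [Field k] (p : ℕ) [Fact p.Prime] [CharP k p]
    (e : ℕ) (he : 1 ≤ e) (f : Polynomial k) :
    hasseDeriv (p ^ e) (f ^ (p ^ e)) = (derivative f) ^ (p ^ e) := by
  simpa only [mul_one, hasseDeriv_one'] using hasseDeriv_pow_frobenius_general p e 1 f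
end

section
/- Let k be a field of prime characteristic p, let n ≥ 0 and e ≥ 1 be integers, let R = k[x_1, …, x_n] be the polynomial ring, let f ∈ R, and let J be an ideal of R such that f^{p^e - 1} belongs to J^{[p^e]}, the ideal generated by the p^e-th powers of all elements of J. Then the Jacobian ideal Jac(f) = (f, ∂f/∂x_1, …, ∂f/∂x_n) is contained in J; that is, f ∈ J and ∂f/∂x_i ∈ J for every i. -/
/-!
Write `q = p ^ e` and `J^{[q]}` for the ideal generated by the `q`-th powers of elements of `J`.
Let `φ : R →+* R⟦X⟧` be a ring homomorphism lifting the identity, that is, a Hasse–Schmidt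
derivation. Since `φ (a ^ q) = φ a ^ q` is `a ^ q` modulo `X ^ q`, the coefficients of index `< q`
of `φ g` lie in `J^{[q]}` for every `g ∈ J^{[q]}`. On the other hand `F ^ (q - 1) * F'` is formally
`(F ^ q / q)'`, so its coefficient of index `q - 1` is the coefficient of index `q` of `F ^ q`,
an identity without denominators. For `F = φ f` the latter coefficient is `(coeff 1 (φ f)) ^ q`,
so `f ^ (q - 1) ∈ J^{[q]}` puts `(coeff 1 (φ f)) ^ q` into `J^{[q]}`. When the Frobenius splits, as
it does for polynomial rings over a field, this forces `coeff 1 (φ f) ∈ J`. Every derivation `D` of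
a polynomial ring has the form `f ↦ coeff 1 (φ f)`, with `φ` sending `x_i` to `x_i + D x_i * X`.
-/

section Split

variable {R S T σ : Type*} [CommSemiring R] [CommSemiring S] [CommSemiring T]

theorem nsmul_tsub_eq_of_nsmul_eq_nsmul_add {q : ℕ} {m s t : σ →₀ ℕ}
    (h : q • t = q • m + s) : q • (t - m) = s := by
  ext i
  have hi : q * t i = q * m i + s i := DFunLike.congr_fun h i
  simp [Nat.mul_sub, hi]

/-- The ring homomorphism `g : R →+* S` splits as a map of `R`-modules, where `R` acts on `S`
through `g`. For the Frobenius of `R` this says that `R` is `F`-split. Linearity of the retraction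
is spelled out because the Frobenius would otherwise give `R` a second module structure over
itself. -/
def IsSplitRingHom (g : R →+* S) : Prop :=
  ∃ φ : S →+ R, (∀ a b, φ (g a * b) = a * φ b) ∧ φ 1 = 1

namespace IsSplitRingHom

open MvPolynomial

theorem comp {h : S →+* T} {g : R →+* S} (hh : IsSplitRingHom h) (hg : IsSplitRingHom g) :
    IsSplitRingHom (h.comp g) := by
  obtain ⟨ψ, hψ, hψ_one⟩ := hh
  obtain ⟨φ, hφ, hφ_one⟩ := hg
  exact ⟨φ.comp ψ, fun a b ↦ by simp [hψ, hφ], by simp [hψ_one, hφ_one]⟩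

theorem comap_map_eq {g : R →+* S} (hg : IsSplitRingHom g) (I : Ideal R) :
    (I.map g).comap g = I := by
  obtain ⟨φ, hφ, hφ_one⟩ := hg
  have map_mem {x : S} (hx : x ∈ I.map g) : φ x ∈ I := by
    induction hx using Submodule.closure_induction with
    | zero => simp
    | add x y _ _ hx hy => simpa using I.add_mem hx hy
    | smul_mem s x hx =>
      obtain ⟨a, ha, rfl⟩ := hx
      rw [smul_eq_mul, mul_comm, hφ]
      exact I.mul_mem_right _ ha
  have retraction_apply (a : R) : φ (g a) = a := by
    rw [← mul_one (g a), hφ, hφ_one, mul_one]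
  refine le_antisymm (fun a ha ↦ ?_) Ideal.le_comap_map
  exact retraction_apply a ▸ map_mem ha

theorem of_field {K A : Type*} [Field K] [CommRing A] [Nontrivial A] (g : K →+* A) :
    IsSplitRingHom g := by
  let := g.toAlgebra
  obtain ⟨φ, hφ⟩ := (Algebra.linearMap K A).exists_leftInverse_of_injective
    (LinearMap.ker_eq_bot.2 g.injective)
  refine ⟨φ.toAddMonoidHom, fun a b ↦ ?_, ?_⟩
  · simpa [Algebra.smul_def] using! φ.map_smul a b
  · simpa using LinearMap.congr_fun hφ 1

theorem of_monomial_mul {g : MvPolynomial σ R →+* MvPolynomial σ S}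
    (φ : MvPolynomial σ S →+ MvPolynomial σ R) (hφ_one : φ 1 = 1)
    (hφ : ∀ m a s b, φ (g (monomial m a) * monomial s b) = monomial m a * φ (monomial s b)) :
    IsSplitRingHom g := by
  refine ⟨φ, fun P Q ↦ ?_, hφ_one⟩
  induction P using MvPolynomial.induction_on' with
  | add P P' hP hP' => rw [map_add, add_mul, map_add, hP, hP', add_mul]
  | monomial m a =>
    induction Q using MvPolynomial.induction_on' with
    | add Q Q' hQ hQ' => rw [mul_add, map_add, hQ, hQ', map_add, mul_add]
    | monomial s b => exact hφ m a s b

theorem mvPolynomial_map {g : R →+* S} (hg : IsSplitRingHom g) :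
    IsSplitRingHom (map (σ := σ) g) := by
  obtain ⟨φ, hφ, hφ_one⟩ := hg
  let Φ : MvPolynomial σ S →+ MvPolynomial σ R :=
    { toFun := AddMonoidAlgebra.map φ
      map_zero' := AddMonoidAlgebra.map_zero φ
      map_add' := AddMonoidAlgebra.map_add φ }
  have Φ_monomial (s : σ →₀ ℕ) (b : S) : Φ (monomial s b) = monomial s (φ b) :=
    AddMonoidAlgebra.map_single φ b s
  refine of_monomial_mul Φ ?_ fun m a s b ↦ ?_
  · rw [← C_1, ← C_1, C_apply, C_apply, Φ_monomial, hφ_one]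
  · rw [map_monomial, monomial_mul, Φ_monomial, Φ_monomial, hφ, monomial_mul]

theorem mvPolynomial_expand {q : ℕ} (hq : q ≠ 0) :
    IsSplitRingHom (expand q : MvPolynomial σ R →ₐ[R] MvPolynomial σ R).toRingHom := by
  -- the `q`-th root of the monomial with exponent `s`, or `0` if there is none
  let root : (σ →₀ ℕ) → MvPolynomial σ R := Function.extend (q • ·) (monomial · 1) 0
  let φ : MvPolynomial σ R →ₗ[R] MvPolynomial σ R := (basisMonomials σ R).constr R root
  have root_smul (t : σ →₀ ℕ) : root (q • t) = monomial t 1 :=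
    (nsmul_right_injective hq).extend_apply _ _ t
  have root_smul_add (m s : σ →₀ ℕ) : root (q • m + s) = monomial m 1 * root s := by
    by_cases hs : ∃ t, q • t = s
    · obtain ⟨t, rfl⟩ := hs
      rw [← smul_add, root_smul, root_smul, monomial_mul, one_mul]
    · have hms : ¬ ∃ t, q • t = q • m + s := fun ⟨t, ht⟩ ↦
        hs ⟨t - m, nsmul_tsub_eq_of_nsmul_eq_nsmul_add ht⟩
      simp only [root, Function.extend_apply' _ _ _ hs, Function.extend_apply' _ _ _ hms,
        Pi.zero_apply, mul_zero]
  have φ_monomial (s : σ →₀ ℕ) (b : R) : φ (monomial s b) = b • root s :=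
    calc φ (monomial s b) = φ (b • basisMonomials σ R s) := by simp [smul_monomial]
      _ = b • root s := by rw [map_smul, Module.Basis.constr_basis]
  refine of_monomial_mul φ.toAddMonoidHom ?_ fun m a s b ↦ ?_
  · simpa using! (φ_monomial 0 1).trans (by simpa using root_smul 0)
  · calc φ (expand q (monomial m a) * monomial s b) = (a * b) • root (q • m + s) := by
          rw [expand_monomial, monomial_mul, φ_monomial]
      _ = (a • monomial m 1) * (b • root s) := by rw [root_smul_add, smul_mul_smul_comm]
      _ = monomial m a * φ (monomial s b) := by
          rw [smul_monomial, smul_eq_mul, mul_one, φ_monomial]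

theorem mvPolynomial_iterateFrobenius {p e : ℕ} [ExpChar R p]
    (hR : IsSplitRingHom (iterateFrobenius R p e)) :
    IsSplitRingHom (iterateFrobenius (MvPolynomial σ R) p e) := by
  convert hR.mvPolynomial_map.comp (mvPolynomial_expand (expChar_pow_pos R p e).ne')
  exact RingHom.ext fun f ↦ (map_iterateFrobenius_expand p f e).symm

end IsSplitRingHom

end Split

section Derivative

open PowerSeries

variable {R S : Type*} [CommSemiring R] [CommSemiring S]

theorem map_derivative (g : R →+* S) (F : R⟦X⟧) :
    PowerSeries.map g (d⁄dX R F) = d⁄dX S (PowerSeries.map g F) := by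
  ext n
  simp [coeff_derivative]

theorem coeff_pow_mul_derivative_of_charZero [IsDomain R] [CharZero R] (F : R⟦X⟧) (n : ℕ) :
    coeff n (F ^ n * d⁄dX R F) = coeff (n + 1) (F ^ (n + 1)) := by
  have derivative_eq : (n + 1) • (F ^ n * d⁄dX R F) = d⁄dX R (F ^ (n + 1)) := by
    rw [derivative_pow, Nat.add_sub_cancel, mul_assoc, nsmul_eq_mul]
  have coeff_eq := congrArg (coeff n) derivative_eq
  rw [coeff_derivative, map_nsmul, nsmul_eq_mul, mul_comm, Nat.cast_succ] at coeff_eq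
  exact mul_right_cancel₀ n.cast_add_one_ne_zero coeff_eq

theorem coeff_pow_mul_derivative (F : R⟦X⟧) (n : ℕ) :
    coeff n (F ^ n * d⁄dX R F) = coeff (n + 1) (F ^ (n + 1)) := by
  -- The identity is universal, so it suffices to check it on a lift to characteristic zero.
  let π : MvPolynomial R ℕ →+* R := MvPolynomial.eval₂Hom (Nat.castRingHom R) id
  have hπ : Function.Surjective π := fun a ↦ ⟨MvPolynomial.X a, by simp [π]⟩
  obtain ⟨G, rfl⟩ := PowerSeries.map_surjective π hπ F
  simpa only [map_derivative, map_mul, map_pow, ← coeff_map] using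
    congrArg π (coeff_pow_mul_derivative_of_charZero G n)

end Derivative

section HasseSchmidt

open PowerSeries

variable {R : Type*} [CommRing R] {p e : ℕ} [ExpChar R p]

theorem coeff_pow_expChar_pow (F : R⟦X⟧) (j : ℕ) :
    coeff j (F ^ p ^ e) = if p ^ e ∣ j then coeff (j / p ^ e) F ^ p ^ e else 0 := by
  have hF : PowerSeries.map (iterateFrobenius R p e)
      (expand (p ^ e) (expChar_pow_pos R p e).ne' F) = F ^ p ^ e :=
    MvPowerSeries.map_iterateFrobenius_expand p (expChar_ne_zero R p) F e
  rw [← hF, coeff_map, coeff_expand, apply_ite (iterateFrobenius R p e), map_zero,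
    iterateFrobenius_def]

variable {J : Ideal R}

theorem mem_of_pow_mem_map_iterateFrobenius (hR : IsSplitRingHom (iterateFrobenius R p e)) {f : R}
    (hf : f ^ (p ^ e - 1) ∈ J.map (iterateFrobenius R p e)) : f ∈ J := by
  rw [← hR.comap_map_eq J, Ideal.mem_comap, iterateFrobenius_def,
    ← pow_sub_one_mul (expChar_pow_pos R p e).ne']
  exact Ideal.mul_mem_right _ _ hf

variable {φ : R →+* R⟦X⟧}

theorem coeff_mem_map_iterateFrobenius (hφ : ∀ a, constantCoeff (φ a) = a) {g : R}
    (hg : g ∈ J.map (iterateFrobenius R p e)) {j : ℕ} (hj : j < p ^ e) :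
    coeff j (φ g) ∈ J.map (iterateFrobenius R p e) := by
  induction hg using Submodule.closure_induction generalizing j with
  | zero => simp
  | add x y _ _ hx hy => simpa using Ideal.add_mem _ (hx hj) (hy hj)
  | smul_mem r x hx =>
    obtain ⟨a, ha, rfl⟩ := hx
    rw [smul_eq_mul, map_mul, iterateFrobenius_def, map_pow, coeff_mul]
    refine Ideal.sum_mem _ fun ⟨i, l⟩ hil ↦ Ideal.mul_mem_left _ _ ?_
    have hl : l < p ^ e := (Finset.HasAntidiagonal.antidiagonal.snd_le hil).trans_lt hj
    rw [coeff_pow_expChar_pow]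
    split_ifs with hdvd
    · rw [Nat.eq_zero_of_dvd_of_lt hdvd hl, Nat.zero_div, coeff_zero_eq_constantCoeff_apply, hφ]
      exact Ideal.mem_map_of_mem (iterateFrobenius R p e) ha
    · exact zero_mem _

theorem coeff_one_mem_of_pow_mem_map_iterateFrobenius
    (hR : IsSplitRingHom (iterateFrobenius R p e)) (hφ : ∀ a, constantCoeff (φ a) = a) {f : R}
    (hf : f ^ (p ^ e - 1) ∈ J.map (iterateFrobenius R p e)) : coeff 1 (φ f) ∈ J := by
  obtain ⟨n, hn⟩ := Nat.exists_eq_add_one.2 (expChar_pow_pos R p e)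
  rw [hn, Nat.add_sub_cancel] at hf
  have coeff_eq : coeff n (φ f ^ n * d⁄dX R (φ f)) = iterateFrobenius R p e (coeff 1 (φ f)) := by
    rw [coeff_pow_mul_derivative, ← hn, coeff_pow_expChar_pow, if_pos dvd_rfl,
      Nat.div_self (expChar_pow_pos R p e), iterateFrobenius_def]
  rw [← hR.comap_map_eq J, Ideal.mem_comap, ← coeff_eq, ← map_pow, coeff_mul]
  refine Ideal.sum_mem _ fun ⟨i, l⟩ hil ↦ Ideal.mul_mem_right _ _ ?_
  have hi : i < p ^ e := hn ▸ Nat.lt_succ_of_le (Finset.HasAntidiagonal.antidiagonal.fst_le hil)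
  exact coeff_mem_map_iterateFrobenius hφ hf hi

end HasseSchmidt

section Taylor

open MvPolynomial

variable {k σ : Type*} [CommSemiring k]

/-- The Hasse–Schmidt derivation `f(x) ↦ f(x + X * D x)` extending a derivation `D` of a polynomial
ring. For `D = ∂/∂x_i` it is the Taylor expansion in the direction of `x_i`. -/
noncomputable def taylorHom (D : Derivation k (MvPolynomial σ k) (MvPolynomial σ k)) :
    MvPolynomial σ k →ₐ[k] PowerSeries (MvPolynomial σ k) :=
  aeval fun i ↦ PowerSeries.C (X i) + PowerSeries.C (D (X i)) * PowerSeries.X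

variable (D : Derivation k (MvPolynomial σ k) (MvPolynomial σ k))

theorem taylorHom_X (i : σ) :
    taylorHom D (X i) = PowerSeries.C (X i) + PowerSeries.C (D (X i)) * PowerSeries.X :=
  aeval_X _ i

theorem constantCoeff_taylorHom (f : MvPolynomial σ k) :
    PowerSeries.constantCoeff (taylorHom D f) = f := by
  induction f using MvPolynomial.induction_on with
  | C a => simp [taylorHom, PowerSeries.algebraMap_apply]
  | add f g hf hg => rw [map_add, map_add, hf, hg]
  | mul_X f i hf => simp [hf, taylorHom_X]

theorem coeff_one_taylorHom (f : MvPolynomial σ k) :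
    PowerSeries.coeff 1 (taylorHom D f) = D f := by
  induction f using MvPolynomial.induction_on with
  | C a => simp [taylorHom, PowerSeries.algebraMap_apply]
  | add f g hf hg => rw [map_add, map_add, map_add, hf, hg]
  | mul_X f i hf =>
    have coeff_one_X : PowerSeries.coeff 1 (taylorHom D (X i)) = D (X i) := by
      simp [taylorHom_X]
    rw [map_mul, PowerSeries.coeff_one_mul, constantCoeff_taylorHom, constantCoeff_taylorHom, hf,
      coeff_one_X, Derivation.leibniz, smul_eq_mul, smul_eq_mul]
    ring

end Taylor

theorem jacobian_subset_general {k σ : Type*} [CommRing k] {p e : ℕ} [ExpChar k p]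
    (hk : IsSplitRingHom (iterateFrobenius k p e)) {f : MvPolynomial σ k}
    {J : Ideal (MvPolynomial σ k)}
    (hf : f ^ (p ^ e - 1) ∈ J.map (iterateFrobenius (MvPolynomial σ k) p e)) :
    f ∈ J ∧ ∀ D : Derivation k (MvPolynomial σ k) (MvPolynomial σ k), D f ∈ J := by
  have hR : IsSplitRingHom (iterateFrobenius (MvPolynomial σ k) p e) :=
    hk.mvPolynomial_iterateFrobenius
  refine ⟨mem_of_pow_mem_map_iterateFrobenius hR hf, fun D ↦ ?_⟩
  rw [← coeff_one_taylorHom]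
  exact coeff_one_mem_of_pow_mem_map_iterateFrobenius (φ := (taylorHom D).toRingHom) hR
    (constantCoeff_taylorHom D) hf

/-- Main theorem: for a field `k` of prime characteristic `p`, `R = k[x_1,…,x_n]`, `f ∈ R` and
an ideal `J` with `f^{p^e-1} ∈ J^{[p^e]}`, the Jacobian ideal
`Jac(f) = (f, ∂f/∂x_1, …, ∂f/∂x_n)` is contained in `J`. -/
theorem jacobian_subset (k : Type*) [Field k] (p : ℕ) [Fact p.Prime] [CharP k p]
    (n : ℕ) (e : ℕ) (he : 1 ≤ e) (f : MvPolynomial (Fin n) k)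
    (J : Ideal (MvPolynomial (Fin n) k))
    (hf : f ^ (p ^ e - 1) ∈
      Ideal.span ((fun a => a ^ (p ^ e)) '' (J : Set (MvPolynomial (Fin n) k)))) :
    f ∈ J ∧ ∀ i : Fin n, MvPolynomial.pderiv i f ∈ J :=
  (jacobian_subset_general (.of_field _) hf).imp_right fun h i ↦ h (MvPolynomial.pderiv i)
end
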